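/- Let R : [0,∞)×[0,∞) → ℝ be a covariance function satisfying condition (H1). If (μ_t)_{t≥0} and (ν_t)_{t≥0} are two weakly continuous families of Borel probability measures on ℝ that both solve the measure-flow equation for R, and μ_0 = ν_0, then μ_t = ν_t for every t ≥ 0. -/

import Mathlib

open MeasureTheory

/-- Condition (H1): for every `T > 0`, `s ↦ R(s,s)` is `C¹` on `(0,∞)`, continuous at `0`, its
derivative has finitely many zeros in `(0,T]`, and there is `α > 1` such that for all
`t ∈ [0,T]` the map `s ↦ R(s,t)` is absolutely continuous on `[0,T]` (expressed via the
fundamental theorem of calculus with an integrable integrand `∂R/∂s`) with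
`sup_{0≤t≤T} ∫_0^T |∂R/∂s(s,t)|^α ds < ∞`. -/
def CondH1 (R : ℝ → ℝ → ℝ) : Prop :=
  ContDiffOn ℝ 1 (fun s => R s s) (Set.Ioi 0) ∧
  ContinuousWithinAt (fun s => R s s) (Set.Ici 0) 0 ∧
  (∀ T > (0 : ℝ), {s ∈ Set.Ioc (0 : ℝ) T | deriv (fun u => R u u) s = 0}.Finite) ∧
  (∀ T > (0 : ℝ), ∃ α > (1 : ℝ), ∃ dR : ℝ → ℝ → ℝ, ∃ C : ℝ,
    ∀ t ∈ Set.Icc (0 : ℝ) T,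
      IntervalIntegrable (fun s => dR s t) volume 0 T ∧
      (∀ s ∈ Set.Icc (0 : ℝ) T, R s t = R 0 t + ∫ u in (0 : ℝ)..s, dR u t) ∧
      ∫⁻ s in Set.Ioc (0 : ℝ) T, ENNReal.ofReal (|dR s t| ^ α) ≤ ENNReal.ofReal C)

/-- `f ∈ C_b³(ℝ)`: three times continuously differentiable with `f` and its first three
derivatives bounded. -/
def IsCb3 (f : ℝ → ℝ) : Prop :=
  ContDiff ℝ 3 f ∧ ∀ k : ℕ, k ≤ 3 → ∃ C : ℝ, ∀ x : ℝ, |iteratedDeriv k f x| ≤ C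

/-- The difference quotient `(f′(x) − f′(y))/(x − y)`, interpreted as `f″(x)` on the diagonal. -/
noncomputable def diffQuot (f : ℝ → ℝ) (x y : ℝ) : ℝ :=
  if x = y then deriv (deriv f) x else (deriv f x - deriv f y) / (x - y)

/-- The measure-flow equation for `R`: for every `t ≥ 0` and every `f ∈ C_b³(ℝ)`,
`∫ f dμ_t = ∫ f dμ_0 + (1/2)∫_0^t (d/ds)R(s,s) ∫∫ (f′(x)−f′(y))/(x−y) dμ_s dμ_s ds`. -/
def SolvesFlow (R : ℝ → ℝ → ℝ) (μ : ℝ → ProbabilityMeasure ℝ) : Prop :=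
  ∀ t ≥ (0 : ℝ), ∀ f : ℝ → ℝ, IsCb3 f →
    ∫ x, f x ∂(μ t : Measure ℝ)
      = (∫ x, f x ∂(μ 0 : Measure ℝ))
        + (1 / 2) * ∫ s in (0 : ℝ)..t,
            deriv (fun u => R u u) s *
              ∫ x, ∫ y, diffQuot f x y ∂(μ s : Measure ℝ) ∂(μ s : Measure ℝ)

/-!
Tested against plane waves, the flow equation becomes a closed integral equation for the
characteristic functions: with `ρ(s) = d/ds R(s,s)`,
`φ_t(u) = φ_0(u) - (u²/2) ∫_0^t ρ(s) ∫_0^1 φ_s(θu) φ_s((1-θ)u) dθ ds`.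
The right side only involves frequencies `|v| ≤ |u|`, and it is Lipschitz in `φ_s` for the supremum
over these since `|φ_s| ≤ 1`. As `ρ` has only finitely many zeros in `(0,1]`, it has constant sign
near `0`, so that continuity of `R(s,s)` at `0` makes it integrable, and Grönwall's inequality
shows that two solutions have the same characteristic functions.
-/

open Filter
open scoped Topology

lemma norm_mul_sub_mul_le_add {A : Type*} [NonUnitalSeminormedRing A] {a b c d : A}
    (ha : ‖a‖ ≤ 1) (hd : ‖d‖ ≤ 1) : ‖a * b - c * d‖ ≤ ‖a - c‖ + ‖b - d‖ := by
  calc ‖a * b - c * d‖ = ‖(a - c) * d + a * (b - d)‖ := by noncomm_ring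
    _ ≤ ‖a - c‖ * ‖d‖ + ‖a‖ * ‖b - d‖ :=
        (norm_add_le _ _).trans (add_le_add (norm_mul_le _ _) (norm_mul_le _ _))
    _ ≤ ‖a - c‖ + ‖b - d‖ := add_le_add (mul_le_of_le_one_right (norm_nonneg _) hd)
        (mul_le_of_le_one_left (norm_nonneg _) ha)

lemma continuous_charFun_probabilityMeasure {E : Type*} [SeminormedAddCommGroup E]
    [InnerProductSpace ℝ E] [MeasurableSpace E] [OpensMeasurableSpace E] (u : E) :
    Continuous fun m : ProbabilityMeasure E => charFun (m : Measure E) u := by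
  simp only [charFun_eq_integral_innerProbChar]
  exact continuous_iff_continuousAt.2 fun m =>
    (ProbabilityMeasure.tendsto_iff_forall_integral_rclike_tendsto ℂ).1 tendsto_id _

section Volterra

lemma absolutelyContinuousOnInterval_pow {f : ℝ → ℝ} {a b : ℝ}
    (hf : AbsolutelyContinuousOnInterval f a b) (n : ℕ) :
    AbsolutelyContinuousOnInterval (fun x => f x ^ n) a b := by
  induction n with
  | zero => simpa using (contDiffOn_const (c := (1 : ℝ))).absolutelyContinuousOnInterval
  | succ n ih =>
    simp only [pow_succ]
    exact ih.mul hf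

lemma integral_mul_primitive_pow {k : ℝ → ℝ} {a b : ℝ} (hk : IntervalIntegrable k volume a b)
    (n : ℕ) :
    ∫ x in a..b, k x * (∫ y in a..x, k y) ^ n = (∫ y in a..b, k y) ^ (n + 1) / (n + 1) := by
  set A : ℝ → ℝ := fun x => ∫ y in a..x, k y
  have hA : AbsolutelyContinuousOnInterval A a b :=
    hk.absolutelyContinuousOnInterval_intervalIntegral Set.left_mem_uIcc
  have hderiv : ∀ᵐ x, x ∈ Set.uIoc a b →
      deriv (fun x => A x ^ (n + 1)) x = (n + 1) * (k x * A x ^ n) := by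
    filter_upwards [hk.ae_hasDerivAt_integral] with x hx hxab
    refine ((hx (Set.uIoc_subset_uIcc hxab) a Set.left_mem_uIcc).fun_pow (n + 1)).deriv.trans ?_
    push_cast
    ring
  have hFTC := (absolutelyContinuousOnInterval_pow hA (n + 1)).integral_deriv_eq_sub
  rw [intervalIntegral.integral_congr_ae hderiv, intervalIntegral.integral_const_mul] at hFTC
  rw [eq_div_iff (by positivity), mul_comm, hFTC]
  simp [A]

variable {ι : Type*} {D : ι → ℝ → ℝ} {k : ℝ → ℝ} {a b M : ℝ}

lemma le_mul_primitive_pow_div_factorial (hk : IntervalIntegrable k volume a b)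
    (hM : ∀ i, ∀ t ∈ Set.Icc a b, D i t ≤ M)
    (hD : ∀ β : ℝ → ℝ, ContinuousOn β (Set.Icc a b) →
      (∀ i, ∀ t ∈ Set.Icc a b, D i t ≤ β t) →
      ∀ i, ∀ t ∈ Set.Icc a b, D i t ≤ ∫ s in a..t, k s * β s)
    (n : ℕ) (i : ι) {t : ℝ} (ht : t ∈ Set.Icc a b) :
    D i t ≤ M * ((∫ s in a..t, k s) ^ n / n.factorial) := by
  induction n generalizing i t with
  | zero => simpa using hM i t ht
  | succ n ih =>
    have hab : Set.uIcc a b = Set.Icc a b := Set.uIcc_of_le (ht.1.trans ht.2)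
    have hcont : ContinuousOn (fun t => ∫ s in a..t, k s) (Set.Icc a b) :=
      hab ▸ intervalIntegral.continuousOn_primitive_interval' hk Set.left_mem_uIcc
    have hkt : IntervalIntegrable k volume a t :=
      hk.mono_set (Set.uIcc_subset_uIcc_left (hab ▸ ht))
    calc D i t ≤ ∫ s in a..t, k s * (M * ((∫ r in a..s, k r) ^ n / n.factorial)) :=
          hD _ (continuousOn_const.mul ((hcont.pow n).div_const _)) (fun j s hs => ih j hs) i t ht
      _ = M / n.factorial * ∫ s in a..t, k s * (∫ r in a..s, k r) ^ n := by
          rw [← intervalIntegral.integral_const_mul]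
          congr with s
          ring
      _ = M * ((∫ s in a..t, k s) ^ (n + 1) / (n + 1).factorial) := by
          rw [integral_mul_primitive_pow hkt, Nat.factorial_succ]
          push_cast
          field_simp

/-- A form of Grönwall's inequality: working with continuous majorants `β` avoids the supremum of
the family, which may fail to be measurable. -/
lemma nonpos_of_forall_le_integral (hk : IntervalIntegrable k volume a b)
    (hM : ∀ i, ∀ t ∈ Set.Icc a b, D i t ≤ M)
    (hD : ∀ β : ℝ → ℝ, ContinuousOn β (Set.Icc a b) →
      (∀ i, ∀ t ∈ Set.Icc a b, D i t ≤ β t) →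
      ∀ i, ∀ t ∈ Set.Icc a b, D i t ≤ ∫ s in a..t, k s * β s)
    (i : ι) {t : ℝ} (ht : t ∈ Set.Icc a b) : D i t ≤ 0 := by
  have hlim : Tendsto (fun n : ℕ => M * ((∫ s in a..t, k s) ^ n / n.factorial)) atTop (𝓝 0) := by
    simpa using (FloorSemiring.tendsto_pow_div_factorial_atTop (∫ s in a..t, k s)).const_mul M
  exact ge_of_tendsto' hlim fun n => le_mul_primitive_pow_div_factorial hk hM hD n i ht

end Volterra

section DerivIntegrable

variable {r : ℝ → ℝ} {a b : ℝ}

lemma intervalIntegrable_deriv_of_forall_deriv_ne_zero (hab : a ≤ b)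
    (hr : ContinuousOn r (Set.Icc a b)) (hne : ∀ x ∈ Set.Ioo a b, deriv r x ≠ 0) :
    IntervalIntegrable (deriv r) volume a b := by
  have hd : ∀ x ∈ Set.Ioo a b, HasDerivAt r (deriv r x) x := fun x hx =>
    (differentiableAt_of_deriv_ne_zero (hne x hx)).hasDerivAt
  have hsign := hasDerivWithinAt_forall_lt_or_forall_gt_of_forall_ne (convex_Ioo a b)
    (fun x hx => (hd x hx).hasDerivWithinAt) hne
  rw [← Set.uIcc_of_le hab] at hr
  have hIoo : Set.Ioo (min a b) (max a b) = Set.Ioo a b := by rw [min_eq_left hab, max_eq_right hab]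
  rw [← hIoo] at hd hsign
  rcases hsign with hneg | hpos
  · have hint : IntervalIntegrable (-deriv r) volume a b :=
      intervalIntegral.intervalIntegrable_deriv_of_nonneg hr.neg
        (fun x hx => (hd x hx).neg) fun x hx => neg_nonneg.mpr (hneg x hx).le
    simpa only [neg_neg] using hint.neg
  · exact intervalIntegral.intervalIntegrable_deriv_of_nonneg hr hd fun x hx => (hpos x hx).le

lemma intervalIntegrable_deriv_of_eventually_deriv_ne_zero (hab : a ≤ b)
    (hr : ContDiffOn ℝ 1 r (Set.Ioi a)) (hra : ContinuousWithinAt r (Set.Ici a) a)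
    (hne : ∀ᶠ x in 𝓝[>] a, deriv r x ≠ 0) :
    IntervalIntegrable (deriv r) volume a b := by
  have hrc : ContinuousOn r (Set.Ici a) := by
    intro x hx
    rcases (Set.mem_Ici.mp hx).eq_or_lt with rfl | hax
    · exact hra
    · exact (hr.continuousOn.continuousAt (Ioi_mem_nhds hax)).continuousWithinAt
  have hdc : ContinuousOn (deriv r) (Set.Ioi a) :=
    hr.continuousOn_deriv_of_isOpen isOpen_Ioi le_rfl
  obtain ⟨c, hac : a < c, hc⟩ := mem_nhdsGT_iff_exists_Ioo_subset.mp hne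
  have hleft : IntervalIntegrable (deriv r) volume a c :=
    intervalIntegrable_deriv_of_forall_deriv_ne_zero hac.le (hrc.mono Set.Icc_subset_Ici_self) hc
  rcases le_total b c with hbc | hcb
  · exact hleft.mono_set (Set.uIcc_subset_uIcc_left (Set.mem_uIcc_of_le hab hbc))
  · exact hleft.trans ((hdc.mono fun x hx =>
      hac.trans_le (Set.uIcc_of_le hcb ▸ hx).1).intervalIntegrable)

lemma CondH1.intervalIntegrable_deriv_diag {R : ℝ → ℝ → ℝ} (hR : CondH1 R) {T : ℝ} (hT : 0 ≤ T) :
    IntervalIntegrable (deriv fun s => R s s) volume 0 T := by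
  obtain ⟨hC1, hcont, hzeros, -⟩ := hR
  refine intervalIntegrable_deriv_of_eventually_deriv_ne_zero hT hC1 hcont ?_
  have hfar : ∀ᶠ s in 𝓝[>] (0 : ℝ), s ∉ {s ∈ Set.Ioc 0 1 | deriv (fun u => R u u) s = 0} :=
    nhdsWithin_le_nhds ((hzeros 1 one_pos).isClosed.compl_mem_nhds (by simp))
  filter_upwards [hfar, Ioo_mem_nhdsGT one_pos] with s hs hs1 h0
  exact hs ⟨Set.Ioo_subset_Ioc_self hs1, h0⟩

end DerivIntegrable

section SegmentLaw

/-- The law of `θ X + (1 - θ) Y`, for independent `X` and `Y` of law `m` and `θ` uniform on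
`(0, 1]`: the measure against which the interaction term of the flow equation integrates `f″`. -/
noncomputable def segmentLaw (m : ProbabilityMeasure ℝ) : ProbabilityMeasure ℝ :=
  ((m.prod m).prod ⟨volume.restrict (Set.Ioc 0 1), ⟨by simp⟩⟩).map
    (f := fun p => p.1.2 + p.2 * (p.1.1 - p.1.2)) (by fun_prop)

lemma continuous_segmentLaw : Continuous segmentLaw := by
  have hmap : Continuous fun p : (ℝ × ℝ) × ℝ => p.1.2 + p.2 * (p.1.1 - p.1.2) := by fun_prop
  exact (ProbabilityMeasure.continuous_map hmap).comp (by fun_prop)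

variable (m : ProbabilityMeasure ℝ)

lemma integral_segmentLaw {E : Type*} [NormedAddCommGroup E] [NormedSpace ℝ E]
    {f : ℝ → E} (hf : StronglyMeasurable f) :
    ∫ z, f z ∂(segmentLaw m : Measure ℝ) =
      ∫ p : (ℝ × ℝ) × ℝ, f (p.1.2 + p.2 * (p.1.1 - p.1.2))
        ∂(((m : Measure ℝ).prod (m : Measure ℝ)).prod (volume.restrict (Set.Ioc 0 1))) :=
  integral_map (by fun_prop) hf.aestronglyMeasurable

lemma diffQuot_eq_integral {f : ℝ → ℝ} (hf : ContDiff ℝ 2 f) (x y : ℝ) :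
    diffQuot f x y = ∫ θ in (0 : ℝ)..1, iteratedDeriv 2 f (y + θ * (x - y)) := by
  have hcont : Continuous (iteratedDeriv 2 f) := hf.continuous_iteratedDeriv 2 le_rfl
  have hderiv : ∀ z, HasDerivAt (deriv f) (iteratedDeriv 2 f z) z := fun z => by
    rw [iteratedDeriv_succ, iteratedDeriv_one]
    exact ((contDiff_succ_iff_deriv (n := 1)).1 hf).2.2.differentiable_one z |>.hasDerivAt
  rw [diffQuot]
  split_ifs with hxy
  · simp [hxy, iteratedDeriv_succ]
  · have hFTC := intervalIntegral.integral_unitInterval_deriv_eq_sub (z₀ := y) (z₁ := x - y)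
      (hcont.comp (by fun_prop)).continuousOn fun θ _ => hderiv (y + θ • (x - y))
    rw [div_eq_iff (sub_ne_zero.mpr hxy), mul_comm]
    simpa using hFTC.symm

lemma integral_integral_diffQuot {f : ℝ → ℝ} (hf : ContDiff ℝ 2 f) {C : ℝ}
    (hC : ∀ x, |iteratedDeriv 2 f x| ≤ C) :
    ∫ x, ∫ y, diffQuot f x y ∂(m : Measure ℝ) ∂(m : Measure ℝ) =
      ∫ z, iteratedDeriv 2 f z ∂(segmentLaw m : Measure ℝ) := by
  have hcont : Continuous (iteratedDeriv 2 f) := hf.continuous_iteratedDeriv 2 le_rfl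
  have hint : Integrable
      (fun p : (ℝ × ℝ) × ℝ => iteratedDeriv 2 f (p.1.2 + p.2 * (p.1.1 - p.1.2)))
      (((m : Measure ℝ).prod (m : Measure ℝ)).prod (volume.restrict (Set.Ioc 0 1))) :=
    .of_bound (hcont.comp (by fun_prop)).aestronglyMeasurable C (.of_forall fun p => hC _)
  rw [integral_segmentLaw m hcont.stronglyMeasurable, integral_prod _ hint,
    integral_prod _ hint.integral_prod_left]
  simp only [diffQuot_eq_integral hf, intervalIntegral.integral_of_le zero_le_one]

lemma charFun_segmentLaw (u : ℝ) :
    charFun (segmentLaw m : Measure ℝ) u =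
      ∫ θ in (0 : ℝ)..1,
        charFun (m : Measure ℝ) (θ * u) * charFun (m : Measure ℝ) ((1 - θ) * u) := by
  have hint : Integrable
      (fun p : (ℝ × ℝ) × ℝ => Complex.exp (u * ↑(p.1.2 + p.2 * (p.1.1 - p.1.2)) * Complex.I))
      (((m : Measure ℝ).prod (m : Measure ℝ)).prod (volume.restrict (Set.Ioc 0 1))) := by
    refine .of_bound (Continuous.aestronglyMeasurable (by fun_prop)) 1 (.of_forall fun p => ?_)
    rw [← Complex.ofReal_mul, Complex.norm_exp_ofReal_mul_I]
  rw [charFun_apply_real, integral_segmentLaw m (Continuous.stronglyMeasurable (by fun_prop)),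
    integral_prod_symm _ hint, intervalIntegral.integral_of_le zero_le_one]
  congr with θ
  rw [charFun_apply_real, charFun_apply_real, ← integral_prod_mul]
  congr with p
  rw [← Complex.exp_add]
  push_cast
  ring_nf

lemma norm_charFun_segmentLaw_sub_le (m n : ProbabilityMeasure ℝ) {u b : ℝ}
    (hb : ∀ v, |v| ≤ |u| → ‖charFun (m : Measure ℝ) v - charFun (n : Measure ℝ) v‖ ≤ b) :
    ‖charFun (segmentLaw m : Measure ℝ) u - charFun (segmentLaw n : Measure ℝ) u‖ ≤ 2 * b := by
  have hint (m : ProbabilityMeasure ℝ) : IntervalIntegrable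
      (fun θ => charFun (m : Measure ℝ) (θ * u) * charFun (m : Measure ℝ) ((1 - θ) * u))
      volume 0 1 :=
    Continuous.intervalIntegrable (by fun_prop) _ _
  have hscale {θ : ℝ} (h0 : 0 ≤ θ) (h1 : θ ≤ 1) : |θ * u| ≤ |u| := by
    rw [abs_mul, abs_of_nonneg h0]
    exact mul_le_of_le_one_left (abs_nonneg u) h1
  rw [charFun_segmentLaw, charFun_segmentLaw, ← intervalIntegral.integral_sub (hint m) (hint n)]
  have hbound : ∀ θ ∈ Set.uIoc (0 : ℝ) 1,
      ‖charFun (m : Measure ℝ) (θ * u) * charFun (m : Measure ℝ) ((1 - θ) * u) -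
        charFun (n : Measure ℝ) (θ * u) * charFun (n : Measure ℝ) ((1 - θ) * u)‖ ≤ 2 * b := by
    intro θ hθ
    rw [Set.uIoc_of_le zero_le_one] at hθ
    have hb₁ := hb (θ * u) (hscale hθ.1.le hθ.2)
    have hb₂ := hb ((1 - θ) * u) (hscale (sub_nonneg.mpr hθ.2) (sub_le_self 1 hθ.1.le))
    rw [two_mul]
    exact (norm_mul_sub_mul_le_add (norm_charFun_le_one _) (norm_charFun_le_one _)).trans
      (add_le_add hb₁ hb₂)
  simpa using intervalIntegral.norm_integral_le_of_norm_le_const hbound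

end SegmentLaw

section PlaneWave

/-- The real plane wave `x ↦ Re (c e^{iux})` of complex amplitude `c` and frequency `u`. These are
the test functions that turn the flow equation into an equation for characteristic functions. -/
noncomputable def planeWave (c : ℂ) (u : ℝ) (x : ℝ) : ℝ :=
  (c * Complex.exp (u * x * Complex.I)).re

variable (c : ℂ) (u : ℝ)

lemma abs_planeWave_le (x : ℝ) : |planeWave c u x| ≤ ‖c‖ := by
  refine (Complex.abs_re_le_norm _).trans_eq ?_
  rw [norm_mul, ← Complex.ofReal_mul, Complex.norm_exp_ofReal_mul_I, mul_one]

lemma contDiff_planeWave {n : WithTop ℕ∞} : ContDiff ℝ n (planeWave c u) := by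
  have hexp : ContDiff ℝ n fun x : ℝ => c * Complex.exp (u * x * Complex.I) :=
    contDiff_const.mul
      ((contDiff_const.mul Complex.ofRealCLM.contDiff).mul contDiff_const).cexp
  exact Complex.reCLM.contDiff.comp hexp

lemma deriv_planeWave : deriv (planeWave c u) = planeWave (c * (u * Complex.I)) u := by
  funext x
  have hexp : HasDerivAt (fun z : ℂ => c * Complex.exp (u * z * Complex.I))
      (c * (u * Complex.I) * Complex.exp (u * x * Complex.I)) x := by
    have hlin : HasDerivAt (fun z : ℂ => u * z * Complex.I) (u * Complex.I) x := by
      simpa using ((hasDerivAt_id (x : ℂ)).const_mul (u : ℂ)).mul_const Complex.I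
    convert! hlin.cexp.const_mul c using 1
    ring
  exact hexp.real_of_complex.deriv

lemma iteratedDeriv_planeWave (k : ℕ) :
    iteratedDeriv k (planeWave c u) = planeWave (c * (u * Complex.I) ^ k) u := by
  induction k with
  | zero => simp
  | succ k ih => rw [iteratedDeriv_succ, ih, deriv_planeWave, pow_succ, mul_assoc]

lemma isCb3_planeWave : IsCb3 (planeWave c u) :=
  ⟨contDiff_planeWave c u, fun k _ => ⟨_, fun x => by
    rw [iteratedDeriv_planeWave]
    exact abs_planeWave_le _ _ x⟩⟩

lemma integral_planeWave (m : Measure ℝ) [IsFiniteMeasure m] :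
    ∫ x, planeWave c u x ∂m = (c * charFun m u).re := by
  have hint : Integrable (fun x : ℝ => c * Complex.exp (u * x * Complex.I)) m := by
    refine .of_bound (by fun_prop) ‖c‖ (.of_forall fun x => ?_)
    rw [norm_mul, ← Complex.ofReal_mul, Complex.norm_exp_ofReal_mul_I, mul_one]
  rw [charFun_apply_real, ← integral_const_mul]
  exact integral_re hint

end PlaneWave

section Flow

variable {R : ℝ → ℝ → ℝ} {μ ν : ℝ → ProbabilityMeasure ℝ} {t : ℝ}

lemma SolvesFlow.integral_eq (hμ : SolvesFlow R μ) (ht : 0 ≤ t) {f : ℝ → ℝ} (hf : IsCb3 f) :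
    ∫ x, f x ∂(μ t : Measure ℝ) = ∫ x, f x ∂(μ 0 : Measure ℝ) +
      (1 / 2) * ∫ s in (0 : ℝ)..t,
        deriv (fun u => R u u) s * ∫ z, iteratedDeriv 2 f z ∂(segmentLaw (μ s) : Measure ℝ) := by
  obtain ⟨C, hC⟩ := hf.2 2 (by norm_num)
  have hf2 : ContDiff ℝ 2 f := hf.1.of_le (by norm_num)
  simpa only [integral_integral_diffQuot _ hf2 hC] using hμ t ht f hf

lemma intervalIntegrable_mul_charFun_segmentLaw {g : ℝ → ℝ} {a b : ℝ}
    (hg : IntervalIntegrable g volume a b) (hμ : ContinuousOn μ (Set.uIcc a b)) (u : ℝ) :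
    IntervalIntegrable (fun s => (g s : ℂ) * charFun (segmentLaw (μ s) : Measure ℝ) u)
      volume a b := by
  have hgC : IntervalIntegrable (fun s => (g s : ℂ)) volume a b := ⟨hg.1.ofReal, hg.2.ofReal⟩
  exact hgC.mul_continuousOn
    ((continuous_charFun_probabilityMeasure u).comp continuous_segmentLaw |>.comp_continuousOn hμ)

lemma SolvesFlow.charFun_eq (hμ : SolvesFlow R μ) (hμc : ContinuousOn μ (Set.Ici 0)) (ht : 0 ≤ t)
    (hR : IntervalIntegrable (deriv fun s => R s s) volume 0 t) (u : ℝ) :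
    charFun (μ t : Measure ℝ) u = charFun (μ 0 : Measure ℝ) u -
      u ^ 2 / 2 * ∫ s in (0 : ℝ)..t,
        (deriv (fun w => R w w) s : ℝ) * charFun (segmentLaw (μ s) : Measure ℝ) u := by
  set g := deriv fun w => R w w
  have hint := intervalIntegrable_mul_charFun_segmentLaw hR
    (hμc.mono (Set.uIcc_of_le ht ▸ Set.Icc_subset_Ici_self)) u
  have hre (c : ℂ) : (c * charFun (μ t : Measure ℝ) u).re =
      (c * (charFun (μ 0 : Measure ℝ) u -
        u ^ 2 / 2 * ∫ s in (0 : ℝ)..t, g s * charFun (segmentLaw (μ s) : Measure ℝ) u)).re := by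
    have hwave := hμ.integral_eq ht (isCb3_planeWave c u)
    simp only [iteratedDeriv_planeWave, integral_planeWave] at hwave
    have hpull : (c * (u * Complex.I) ^ 2 *
        ∫ s in (0 : ℝ)..t, g s * charFun (segmentLaw (μ s) : Measure ℝ) u).re =
        ∫ s in (0 : ℝ)..t,
          g s * (c * (u * Complex.I) ^ 2 * charFun (segmentLaw (μ s) : Measure ℝ) u).re := by
      rw [← intervalIntegral.integral_const_mul]
      refine (Complex.reCLM.intervalIntegral_comp_comm (hint.const_mul _)).symm.trans ?_
      congr with s
      rw [Complex.reCLM_apply, mul_left_comm, Complex.re_ofReal_mul]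
    rw [hwave, ← hpull, ← Complex.re_ofReal_mul, ← Complex.add_re, mul_pow, Complex.I_sq]
    congr 1
    push_cast
    ring
  refine Complex.ext ?_ ?_
  · simpa only [one_mul] using hre 1
  · simpa using hre (-Complex.I)

lemma SolvesFlow.norm_charFun_sub_le (hμ : SolvesFlow R μ) (hν : SolvesFlow R ν)
    (hμc : ContinuousOn μ (Set.Ici 0)) (hνc : ContinuousOn ν (Set.Ici 0)) (h0 : μ 0 = ν 0)
    (ht : 0 ≤ t) (hR : IntervalIntegrable (deriv fun s => R s s) volume 0 t)
    {u : ℝ} {β : ℝ → ℝ} (hβc : ContinuousOn β (Set.Icc 0 t))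
    (hβ : ∀ v, |v| ≤ |u| → ∀ s ∈ Set.Icc 0 t,
      ‖charFun (μ s : Measure ℝ) v - charFun (ν s : Measure ℝ) v‖ ≤ β s) :
    ‖charFun (μ t : Measure ℝ) u - charFun (ν t : Measure ℝ) u‖ ≤
      u ^ 2 * ∫ s in (0 : ℝ)..t, |deriv (fun w => R w w) s| * β s := by
  set g := deriv fun w => R w w
  have hIcc : Set.uIcc 0 t = Set.Icc 0 t := Set.uIcc_of_le ht
  have hint {κ : ℝ → ProbabilityMeasure ℝ} (hκ : ContinuousOn κ (Set.Ici 0)) :=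
    intervalIntegrable_mul_charFun_segmentLaw hR
      (hκ.mono (hIcc ▸ Set.Icc_subset_Ici_self)) u
  have hdiff : charFun (μ t : Measure ℝ) u - charFun (ν t : Measure ℝ) u =
      -(u ^ 2 / 2) * ∫ s in (0 : ℝ)..t, (g s : ℂ) *
        (charFun (segmentLaw (μ s) : Measure ℝ) u - charFun (segmentLaw (ν s) : Measure ℝ) u) := by
    simp only [mul_sub]
    rw [hμ.charFun_eq hμc ht hR, hν.charFun_eq hνc ht hR, h0,
      intervalIntegral.integral_sub (hint hμc) (hint hνc)]
    ring
  have hbound : ∀ s ∈ Set.Ioc 0 t, ‖(g s : ℂ) *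
      (charFun (segmentLaw (μ s) : Measure ℝ) u - charFun (segmentLaw (ν s) : Measure ℝ) u)‖ ≤
        2 * (|g s| * β s) := by
    intro s hs
    rw [norm_mul, Complex.norm_real, Real.norm_eq_abs, mul_left_comm]
    gcongr
    exact norm_charFun_segmentLaw_sub_le (μ s) (ν s)
      fun v hv => hβ v hv s (Set.Ioc_subset_Icc_self hs)
  have hmajor : IntervalIntegrable (fun s => 2 * (|g s| * β s)) volume 0 t :=
    (hR.abs.mul_continuousOn (hIcc ▸ hβc)).const_mul 2
  calc ‖charFun (μ t : Measure ℝ) u - charFun (ν t : Measure ℝ) u‖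
      ≤ u ^ 2 / 2 * ∫ s in (0 : ℝ)..t, 2 * (|g s| * β s) := by
        rw [hdiff, norm_mul]
        gcongr
        · simp
        · exact intervalIntegral.norm_integral_le_of_norm_le ht (.of_forall hbound) hmajor
    _ = u ^ 2 * ∫ s in (0 : ℝ)..t, |g s| * β s := by
        rw [intervalIntegral.integral_const_mul]
        ring

lemma SolvesFlow.charFun_eq_charFun (hμ : SolvesFlow R μ) (hν : SolvesFlow R ν)
    (hμc : ContinuousOn μ (Set.Ici 0)) (hνc : ContinuousOn ν (Set.Ici 0)) (h0 : μ 0 = ν 0)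
    (ht : 0 ≤ t) (hR : IntervalIntegrable (deriv fun s => R s s) volume 0 t) (u : ℝ) :
    charFun (μ t : Measure ℝ) u = charFun (ν t : Measure ℝ) u := by
  set D : {v : ℝ // |v| ≤ |u|} → ℝ → ℝ := fun v s =>
    ‖charFun (μ s : Measure ℝ) v - charFun (ν s : Measure ℝ) v‖
  have hM : ∀ v, ∀ s ∈ Set.Icc 0 t, D v s ≤ 2 := fun v s _ =>
    (norm_sub_le_of_le (norm_charFun_le_one _) (norm_charFun_le_one _)).trans_eq one_add_one_eq_two
  have hD : ∀ β : ℝ → ℝ, ContinuousOn β (Set.Icc 0 t) →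
      (∀ v, ∀ s ∈ Set.Icc 0 t, D v s ≤ β s) → ∀ v, ∀ s ∈ Set.Icc 0 t,
        D v s ≤ ∫ r in (0 : ℝ)..s, u ^ 2 * |deriv (fun w => R w w) r| * β r := by
    intro β hβc hβ v s hs
    have hsub : Set.Icc 0 s ⊆ Set.Icc 0 t := Set.Icc_subset_Icc_right hs.2
    have hRs := hR.mono_set (Set.uIcc_subset_uIcc_left (Set.mem_uIcc_of_le hs.1 hs.2))
    have hnonneg : 0 ≤ ∫ r in (0 : ℝ)..s, |deriv (fun w => R w w) r| * β r :=
      intervalIntegral.integral_nonneg hs.1 fun r hr =>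
        mul_nonneg (abs_nonneg _) ((norm_nonneg _).trans (hβ v r (hsub hr)))
    calc D v s ≤ (v : ℝ) ^ 2 * ∫ r in (0 : ℝ)..s, |deriv (fun w => R w w) r| * β r :=
          hμ.norm_charFun_sub_le hν hμc hνc h0 hs.1 hRs (hβc.mono hsub)
            fun w hw r hr => hβ ⟨w, hw.trans v.2⟩ r (hsub hr)
      _ ≤ u ^ 2 * ∫ r in (0 : ℝ)..s, |deriv (fun w => R w w) r| * β r :=
          mul_le_mul_of_nonneg_right (sq_le_sq.mpr v.2) hnonneg
      _ = ∫ r in (0 : ℝ)..s, u ^ 2 * |deriv (fun w => R w w) r| * β r := by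
          simp only [mul_assoc, intervalIntegral.integral_const_mul]
  have hzero : D ⟨u, le_rfl⟩ t ≤ 0 :=
    nonpos_of_forall_le_integral (hR.abs.const_mul (u ^ 2)) hM hD _ ⟨ht, le_rfl⟩
  exact sub_eq_zero.mp (norm_le_zero_iff.mp hzero)

end Flow

theorem flow_equation_uniqueness_general
    (R : ℝ → ℝ → ℝ) (hR : ∀ T ≥ (0 : ℝ), IntervalIntegrable (deriv fun s => R s s) volume 0 T)
    (μ ν : ℝ → ProbabilityMeasure ℝ)
    (hμc : ContinuousOn μ (Set.Ici 0)) (hνc : ContinuousOn ν (Set.Ici 0))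
    (hμ : SolvesFlow R μ) (hν : SolvesFlow R ν)
    (h0 : μ 0 = ν 0) :
    ∀ t ≥ (0 : ℝ), μ t = ν t := by
  intro t ht
  have hchar : charFun (μ t : Measure ℝ) = charFun (ν t : Measure ℝ) :=
    funext (hμ.charFun_eq_charFun hν hμc hνc h0 ht (hR t ht))
  have hmeas : (μ t : Measure ℝ) = ν t := Measure.ext_of_charFun hchar
  exact Subtype.ext hmeas

/-- **Uniqueness for the measure-flow equation.** Under condition (H1), two weakly continuous
families of Borel probability measures on `ℝ` solving the measure-flow equation for `R` with the
same initial value coincide for all `t ≥ 0`. -/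
theorem flow_equation_uniqueness
    (R : ℝ → ℝ → ℝ) (hR : CondH1 R)
    (μ ν : ℝ → ProbabilityMeasure ℝ)
    (hμc : ContinuousOn μ (Set.Ici 0)) (hνc : ContinuousOn ν (Set.Ici 0))
    (hμ : SolvesFlow R μ) (hν : SolvesFlow R ν)
    (h0 : μ 0 = ν 0) :
    ∀ t ≥ (0 : ℝ), μ t = ν t := by
  exact flow_equation_uniqueness_general R (fun _ hT => hR.intervalIntegrable_deriv_diag hT)
    μ ν hμc hνc hμ hν h0
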